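/- arXiv:1312.4377 — 10 statements merged into one kernel-verified Lean document; each statement's English description precedes it below -/
import Mathlib

section
/- Let f : [0,∞) → [0,∞) be amenable and tightly bounded. Then f is metric-preserving, i.e. for every metric space (X,d), the composition f∘d is a metric on X. -/
def IsMetric {X : Type*} (d : X → X → ℝ) : Prop :=
  (∀ x y, 0 ≤ d x y) ∧ (∀ x y, d x y = 0 ↔ x = y) ∧
  (∀ x y, d x y = d y x) ∧ (∀ x y z, d x y ≤ d x z + d z y)

def IsUltrametric {X : Type*} (d : X → X → ℝ) : Prop :=
  (∀ x y, 0 ≤ d x y) ∧ (∀ x y, d x y = 0 ↔ x = y) ∧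
  (∀ x y, d x y = d y x) ∧ (∀ x y z, d x y ≤ max (d x z) (d z y))

def MetricPreserving (f : ℝ → ℝ) : Prop :=
  ∀ (X : Type) (d : X → X → ℝ), IsMetric d → IsMetric fun x y => f (d x y)

def UltrametricPreserving (f : ℝ → ℝ) : Prop :=
  ∀ (X : Type) (d : X → X → ℝ), IsUltrametric d → IsUltrametric fun x y => f (d x y)

def MetricUltrametricPreserving (f : ℝ → ℝ) : Prop :=
  ∀ (X : Type) (d : X → X → ℝ), IsMetric d → IsUltrametric fun x y => f (d x y)

def UltrametricMetricPreserving (f : ℝ → ℝ) : Prop :=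
  ∀ (X : Type) (d : X → X → ℝ), IsUltrametric d → IsMetric fun x y => f (d x y)

def Amenable (f : ℝ → ℝ) : Prop :=
  ∀ x, 0 ≤ x → (f x = 0 ↔ x = 0)

theorem stmt1 (f : ℝ → ℝ) (hf : ∀ x, 0 ≤ x → 0 ≤ f x)
    (hamen : Amenable f)
    (htight : ∃ v : ℝ, 0 < v ∧ ∀ x : ℝ, 0 < x → v ≤ f x ∧ f x ≤ 2 * v) :
    MetricPreserving f := by
  obtain ⟨v, hv, hb⟩ := htight
  intro X d hd
  obtain ⟨h0, h1, h2, h3⟩ := hd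
  refine ⟨fun x y => hf _ (h0 x y), fun x y => (hamen _ (h0 x y)).trans (h1 x y),
    fun x y => congrArg f (h2 x y), ?_⟩
  intro x y z
  show f (d x y) ≤ f (d x z) + f (d z y)
  have hz : f 0 = 0 := (hamen 0 le_rfl).2 rfl
  have hxz := hf _ (h0 x z)
  have hzy := hf _ (h0 z y)
  rcases (h0 x z).eq_or_lt with e | p
  · have : x = z := (h1 x z).1 e.symm
    subst this
    linarith
  rcases (h0 z y).eq_or_lt with e | q
  · have : z = y := (h1 z y).1 e.symm
    subst this
    linarith
  rcases (h0 x y).eq_or_lt with e | r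
  · rw [← e, hz]
    linarith
  linarith [(hb _ p).1, (hb _ q).1, (hb _ r).2]
end

section
/- Let f : [0,∞) → [0,∞). Then f is ultrametric-preserving if and only if f is amenable and increasing on [0,∞). -/
theorem stmt5 (f : ℝ → ℝ) (hf : ∀ x, 0 ≤ x → 0 ≤ f x) :
    UltrametricPreserving f ↔
      (Amenable f ∧ ∀ a b : ℝ, 0 ≤ a → a ≤ b → f a ≤ f b) := by
  constructor
  · intro h
    have hd : IsUltrametric (fun x y : {x : ℝ // 0 ≤ x} =>
        if x = y then (0 : ℝ) else max x.1 y.1) := by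
      refine ⟨?_, ?_, ?_, ?_⟩
      · rintro ⟨x, hx⟩ ⟨y, hy⟩
        dsimp only
        split_ifs
        · exact le_rfl
        · exact le_max_of_le_left hx
      · rintro ⟨x, hx⟩ ⟨y, hy⟩
        simp only [Subtype.mk.injEq]
        grind
      · rintro ⟨x, hx⟩ ⟨y, hy⟩
        simp only [Subtype.mk.injEq]
        grind
      · rintro ⟨x, hx⟩ ⟨y, hy⟩ ⟨z, hz⟩
        simp only [Subtype.mk.injEq]
        grind
    obtain ⟨_, h2, _, h4⟩ := h _ _ hd
    refine ⟨?_, ?_⟩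
    · intro x hx
      have := h2 ⟨0, le_rfl⟩ ⟨x, hx⟩
      simp only [Subtype.mk.injEq] at this
      grind
    · intro a b ha hab
      rcases hab.eq_or_lt with rfl | hlt
      · exact le_rfl
      have hb : 0 ≤ b := ha.trans hab
      rcases ha.eq_or_lt with rfl | hpos
      · have := h2 ⟨0, le_rfl⟩ ⟨0, le_rfl⟩
        simp only [if_true, iff_true] at this
        rw [this]
        exact hf b hb
      · have := h4 ⟨0, le_rfl⟩ ⟨a, ha⟩ ⟨b, hb⟩
        simp only [Subtype.mk.injEq] at this
        rw [if_neg hpos.ne, if_neg (hpos.trans hlt).ne, if_neg hlt.ne', max_eq_right ha,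
          max_eq_right hb, max_eq_left hab, max_self] at this
        exact this
  · rintro ⟨hA, hm⟩ X d ⟨h1, h2, h3, h4⟩
    refine ⟨fun x y => hf _ (h1 x y), fun x y => (hA _ (h1 x y)).trans (h2 x y),
      fun x y => congrArg f (h3 x y), fun x y z => ?_⟩
    rcases le_max_iff.1 (h4 x y z) with h | h
    · exact le_max_of_le_left (hm _ _ (h1 x y) h)
    · exact le_max_of_le_right (hm _ _ (h1 x y) h)
end

section
/- If f : [0,∞) → [0,∞) is ultrametric-preserving and subadditive, then f is metric-preserving. -/
theorem stmt6 (f : ℝ → ℝ) (hf : ∀ x, 0 ≤ x → 0 ≤ f x)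
    (hup : UltrametricPreserving f)
    (hsub : ∀ a b : ℝ, 0 ≤ a → 0 ≤ b → f (a + b) ≤ f a + f b) :
    MetricPreserving f := by
  have key : IsUltrametric (fun x y : {x : ℝ // 0 ≤ x} =>
      if x = y then (0 : ℝ) else max x.1 y.1) := by
    clear hup hsub hf
    refine ⟨?_, ?_, ?_, ?_⟩
    · rintro ⟨x, hx⟩ ⟨y, hy⟩
      dsimp only
      split_ifs
      · exact le_rfl
      · exact le_max_of_le_left hx
    · rintro ⟨x, hx⟩ ⟨y, hy⟩
      simp only [Subtype.mk.injEq, max_def]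
      grind
    · rintro ⟨x, hx⟩ ⟨y, hy⟩
      simp only [Subtype.mk.injEq, max_def]
      grind
    · rintro ⟨x, hx⟩ ⟨y, hy⟩ ⟨z, hz⟩
      simp only [Subtype.mk.injEq, max_def]
      grind
  obtain ⟨-, h0, -, h3⟩ := hup _ _ key
  have ham : ∀ a, 0 ≤ a → (f a = 0 ↔ a = 0) := by
    intro a ha
    have h := h0 ⟨0, le_rfl⟩ ⟨a, ha⟩
    simp only [Subtype.mk.injEq, max_eq_right ha] at h
    clear hup hsub hf h3 h0 key
    grind
  have hmono : ∀ a b, 0 ≤ a → a ≤ b → f a ≤ f b := by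
    intro a b ha hab
    have hb := ha.trans hab
    have h := h3 ⟨0, le_rfl⟩ ⟨a, ha⟩ ⟨b, hb⟩
    simp only [Subtype.mk.injEq, max_eq_right ha, max_eq_right hb, max_eq_left hab] at h
    have := hf b hb
    have h1 := ham a ha
    have h2 := ham b hb
    clear hup hsub hf h3 h0 key ham
    grind
  rintro X d ⟨d0, d1, d2, d3⟩
  refine ⟨fun x y => hf _ (d0 x y), fun x y => (ham _ (d0 x y)).trans (d1 x y),
    fun x y => congrArg f (d2 x y), fun x y z => ?_⟩
  exact (hmono _ _ (d0 x y) (d3 x y z)).trans (hsub _ _ (d0 x z) (d0 z y))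
end

section
/- If f : [0,∞) → [0,∞) is amenable and concave, then f is ultrametric-preserving. -/
theorem stmt9 (f : ℝ → ℝ) (hf : ∀ x, 0 ≤ x → 0 ≤ f x)
    (hamen : Amenable f)
    (hconc : ∀ x₁ x₂ t : ℝ, 0 ≤ x₁ → 0 ≤ x₂ → 0 ≤ t → t ≤ 1 →
      (1 - t) * f x₁ + t * f x₂ ≤ f ((1 - t) * x₁ + t * x₂)) :
    UltrametricPreserving f := by
  have hmono : ∀ a b : ℝ, 0 ≤ a → a ≤ b → f a ≤ f b := by
    intro a b ha hab
    by_contra hlt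
    have hlt : f b < f a := not_le.mp hlt
    have hb := hf b (ha.trans hab)
    have hfa : 0 < f a := lt_of_le_of_lt hb hlt
    obtain ⟨t, ht⟩ : ∃ t, t = (f a - f b) / (2 * f a) := ⟨_, rfl⟩
    have ht0 : 0 < t := by
      rw [ht]; exact div_pos (by linarith) (by linarith)
    have ht1 : t * f a = (f a - f b) / 2 := by
      rw [ht]; field_simp
    have ht2 : t ≤ 1 := by
      rw [ht, div_le_one (by linarith)]; linarith
    have hz : 0 ≤ a + (b - a) / t := by
      have := div_nonneg (sub_nonneg.mpr hab) ht0.le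
      linarith
    have h := hconc a (a + (b - a) / t) t ha hz ht0.le ht2
    have he : (1 - t) * a + t * (a + (b - a) / t) = b := by
      field_simp; ring
    rw [he] at h
    have h3 := mul_nonneg ht0.le (hf _ hz)
    nlinarith
  intro X d hd
  obtain ⟨h0, h1, h2, h3⟩ := hd
  refine ⟨fun x y => hf _ (h0 x y), fun x y => (hamen _ (h0 x y)).trans (h1 x y),
    fun x y => congrArg f (h2 x y), fun x y z => ?_⟩
  rcases le_max_iff.mp (h3 x y z) with h | h
  · exact (hmono _ _ (h0 x y) h).trans (le_max_left _ _)
  · exact (hmono _ _ (h0 x y) h).trans (le_max_right _ _)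
end

section
/- Let f : [0,∞) → [0,∞). Then f is metric-ultrametric-preserving if and only if f is amenable and f is constant on (0,∞) (i.e. there exists c > 0 such that f(x) = c for all x > 0 and f(0) = 0). -/
theorem isMetric_three (a b : ℝ) (ha : 0 < a) (hb : 0 < b) (hab : b ≤ 2 * a) :
    IsMetric (fun x y : Fin 3 => if x = y then (0 : ℝ) else if x = 2 ∨ y = 2 then a else b) := by
  refine ⟨?_, ?_, ?_, ?_⟩
  · intro x y
    dsimp only
    split_ifs <;> linarith
  · intro x y
    dsimp only
    split_ifs with h1 h2
    · simp [h1]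
    · simp [h1, ha.ne']
    · simp [h1, hb.ne']
  · intro x y
    fin_cases x <;> fin_cases y <;> simp
  · intro x y z
    fin_cases x <;> fin_cases y <;> fin_cases z <;> simp <;> linarith

theorem stmt12 (f : ℝ → ℝ) (hf : ∀ x, 0 ≤ x → 0 ≤ f x) :
    MetricUltrametricPreserving f ↔
      (f 0 = 0 ∧ ∃ c : ℝ, 0 < c ∧ ∀ x : ℝ, 0 < x → f x = c) := by
  constructor
  · intro h
    have key : ∀ a b : ℝ, 0 < a → 0 < b → b ≤ 2 * a → f b ≤ f a := by
      intro a b ha hb hab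
      have := (h (Fin 3) _ (isMetric_three a b ha hb hab)).2.2.2 0 1 2
      simpa using this
    have key2 : ∀ n : ℕ, ∀ a b : ℝ, 0 < a → 0 < b → b ≤ 2 ^ n * a → f b ≤ f a := by
      intro n
      induction n with
      | zero =>
        intro a b ha hb hab
        exact key a b ha hb (by simp at hab; linarith)
      | succ k ih =>
        intro a b ha hb hab
        refine (ih (2 * a) b (by linarith) hb ?_).trans (key a (2 * a) ha (by linarith) le_rfl)
        rw [pow_succ] at hab
        linarith
    have key3 : ∀ a b : ℝ, 0 < a → 0 < b → f b ≤ f a := by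
      intro a b ha hb
      obtain ⟨n, hn⟩ := pow_unbounded_of_one_lt (b / a) (one_lt_two)
      exact key2 n a b ha hb ((div_lt_iff₀ ha).1 hn).le
    have h1 := (h (Fin 3) _ (isMetric_three 1 1 one_pos one_pos (by norm_num))).2.1
    have h00 : f 0 = 0 := by simpa using h1 0 0
    have h01 : f 1 ≠ 0 := by simpa using h1 0 1
    exact ⟨h00, f 1, lt_of_le_of_ne (hf 1 zero_le_one) h01.symm,
      fun x hx => le_antisymm (key3 1 x one_pos hx) (key3 x 1 hx one_pos)⟩
  · rintro ⟨h0, c, hc, hfc⟩ X d ⟨d1, d2, d3, d4⟩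
    have hz : ∀ x y, f (d x y) = 0 ↔ x = y := by
      intro x y
      rw [← d2]
      constructor
      · intro h
        by_contra hne
        have := hfc _ (lt_of_le_of_ne (d1 x y) (Ne.symm hne))
        linarith
      · intro h
        rw [h, h0]
    have hv : ∀ x y, x ≠ y → f (d x y) = c := fun x y hxy =>
      hfc _ (lt_of_le_of_ne (d1 x y) (fun e => hxy ((d2 x y).1 e.symm)))
    refine ⟨fun x y => hf _ (d1 x y), hz, fun x y => by simp only [d3 x y], ?_⟩
    intro x y z
    dsimp only
    by_cases hxy : x = y
    · rw [(hz x y).2 hxy]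
      exact le_max_of_le_left (hf _ (d1 _ _))
    · rw [hv x y hxy]
      by_cases hxz : x = z
      · subst hxz
        rw [hv x y hxy]
        exact le_max_right _ _
      · rw [hv x z hxz]
        exact le_max_left _ _
end

section
/- Let f : [0,∞) → [0,∞) be metric-ultrametric-preserving. Then for every metric space (X,d), the metric f∘d is uniformly discrete: there exists ε > 0 such that for every x ∈ X, the open ball of radius ε around x in the metric f∘d equals {x}. -/
theorem stmt13_aux (f : ℝ → ℝ) (h : MetricUltrametricPreserving f) (a b : ℝ)
    (hb : 0 < b) (hab : b ≤ 2 * a) : f b ≤ f a := by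
  have ha : 0 < a := by linarith
  have hm : IsMetric (fun x y : Fin 3 =>
      if x = y then (0 : ℝ) else if x ≠ 2 ∧ y ≠ 2 then b else a) := by
    refine ⟨?_, ?_, ?_, ?_⟩
    · intro x y
      fin_cases x <;> fin_cases y <;> simp <;> linarith
    · intro x y
      fin_cases x <;> fin_cases y <;> simp <;> linarith
    · intro x y
      fin_cases x <;> fin_cases y <;> simp
    · intro x y z
      fin_cases x <;> fin_cases y <;> fin_cases z <;> simp <;> linarith
  have := (h _ _ hm).2.2.2 0 1 2
  simpa using this

theorem stmt13_aux2 (f : ℝ → ℝ) (h : MetricUltrametricPreserving f) (a : ℝ)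
    (ha : 0 < a) (n : ℕ) : f (2 ^ n * a) ≤ f a := by
  induction n with
  | zero => simp
  | succ k ih =>
    refine le_trans (stmt13_aux f h (2 ^ k * a) _ (by positivity) ?_) ih
    rw [pow_succ]
    linarith

theorem stmt13 (f : ℝ → ℝ) (hf : ∀ x, 0 ≤ x → 0 ≤ f x)
    (h : MetricUltrametricPreserving f) :
    ∀ (X : Type) (d : X → X → ℝ), IsMetric d →
      ∃ ε : ℝ, 0 < ε ∧ ∀ x : X, {y : X | f (d x y) < ε} = {x} := by
  intro X d hd
  have hR : IsMetric (fun x y : ℝ => |x - y|) := by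
    refine ⟨fun x y => abs_nonneg _, fun x y => ?_, fun x y => abs_sub_comm x y,
      fun x y z => abs_sub_le x z y⟩
    simp [sub_eq_zero]
  have hu := h _ _ hR
  have h1 : 0 < f 1 := by
    refine lt_of_le_of_ne (hf 1 zero_le_one) fun h0 => ?_
    have := (hu.2.1 1 0).1 (by simpa using h0.symm)
    norm_num at this
  refine ⟨f 1, h1, fun x => ?_⟩
  ext y
  simp only [Set.mem_setOf_eq, Set.mem_singleton_iff]
  constructor
  · intro hy
    by_contra hne
    have hpos : 0 < d x y :=
      lt_of_le_of_ne (hd.1 x y) fun h0 => hne ((hd.2.1 x y).1 h0.symm).symm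
    obtain ⟨n, hn⟩ := pow_unbounded_of_one_lt (1 / d x y) (one_lt_two (α := ℝ))
    rw [div_lt_iff₀ hpos] at hn
    have := stmt13_aux f h (2 ^ n * d x y) 1 one_pos (by linarith)
    have := stmt13_aux2 f h (d x y) hpos n
    linarith
  · rintro rfl
    have := ((h _ _ hd).2.1 y y).2 rfl
    simp only at this
    rw [this]
    exact h1
end

section
/- Let f : [0,∞) → [0,∞) be amenable. Then f is metric-preserving if and only if for every triangle triplet (a,b,c), we have f(a) ≤ f(b) + f(c). -/
theorem stmt14 (f : ℝ → ℝ) (hf : ∀ x, 0 ≤ x → 0 ≤ f x)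
    (hamen : Amenable f) :
    MetricPreserving f ↔
      ∀ a b c : ℝ, 0 ≤ a → 0 ≤ b → 0 ≤ c →
        a ≤ b + c → b ≤ c + a → c ≤ a + b → f a ≤ f b + f c := by
  constructor
  · intro h a b c ha hb hc h1 h2 h3
    rcases ha.eq_or_lt with rfl | ha'
    · rw [(hamen 0 le_rfl).2 rfl]
      exact add_nonneg (hf b hb) (hf c hc)
    rcases hb.eq_or_lt with rfl | hb'
    · have : a = c := by linarith
      subst this
      linarith [hf 0 le_rfl]
    rcases hc.eq_or_lt with rfl | hc'
    · have : a = b := by linarith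
      subst this
      linarith [hf 0 le_rfl]
    have hd : IsMetric (fun i j : Fin 3 => !![0, a, b; a, 0, c; b, c, 0] i j) := by
      refine ⟨?_, ?_, ?_, ?_⟩
      · intro x y
        fin_cases x <;> fin_cases y <;> simp <;> linarith
      · intro x y
        fin_cases x <;> fin_cases y <;> simp [ha'.ne', hb'.ne', hc'.ne']
      · intro x y
        fin_cases x <;> fin_cases y <;> simp
      · intro x y z
        fin_cases x <;> fin_cases y <;> fin_cases z <;> simp <;> linarith
    have key := (h (Fin 3) _ hd).2.2.2 0 1 2
    simp at key
    exact key
  · intro h X d hd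
    obtain ⟨d0, d1, d2, d3⟩ := hd
    refine ⟨fun x y => hf _ (d0 x y), fun x y => (hamen _ (d0 x y)).trans (d1 x y),
      fun x y => congrArg f (d2 x y), fun x y z => ?_⟩
    refine h _ _ _ (d0 _ _) (d0 _ _) (d0 _ _) (d3 x y z) ?_ ?_
    · have := d3 x z y
      rw [d2 y z] at this
      linarith
    · have := d3 z y x
      rw [d2 z x] at this
      linarith
end

section
/- Let f : [0,∞) → [0,∞) be amenable. Then f is ultrametric-metric-preserving if and only if for all 0 ≤ a ≤ b, f(a) ≤ 2·f(b). -/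
theorem stmt15 (f : ℝ → ℝ) (hf : ∀ x, 0 ≤ x → 0 ≤ f x)
    (hamen : Amenable f) :
    UltrametricMetricPreserving f ↔
      ∀ a b : ℝ, 0 ≤ a → a ≤ b → f a ≤ 2 * f b := by
  constructor
  · intro h a b ha hab
    rcases ha.eq_or_lt with rfl | ha'
    · have h0 : f 0 = 0 := (hamen 0 le_rfl).2 rfl
      have := hf b hab
      linarith
    · have hb : 0 < b := lt_of_lt_of_le ha' hab
      have key := h (Fin 3)
        (fun x y => if x = y then 0 else if x = 2 ∨ y = 2 then b else a) (by
          refine ⟨?_, ?_, ?_, ?_⟩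
          · intro x y
            fin_cases x <;> fin_cases y <;> simp <;> linarith
          · intro x y
            fin_cases x <;> fin_cases y <;> simp <;> linarith
          · intro x y
            fin_cases x <;> fin_cases y <;> simp
          · intro x y z
            fin_cases x <;> fin_cases y <;> fin_cases z <;> simp <;> grind)
      have t := key.2.2.2 0 1 2
      simp at t
      linarith
  · intro h X d hd
    obtain ⟨h0, h1, h2, h3⟩ := hd
    refine ⟨fun x y => hf _ (h0 x y), fun x y => (hamen _ (h0 x y)).trans (h1 x y),
      fun x y => by simp only [h2 x y], fun x y z => ?_⟩
    show f (d x y) ≤ f (d x z) + f (d z y)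
    have p := h3 x y z
    have q := h3 x z y
    have r := h3 z y x
    rw [h2 y z] at q
    rw [h2 z x] at r
    have n1 := hf _ (h0 x z)
    have n2 := hf _ (h0 z y)
    rcases lt_trichotomy (d x z) (d z y) with l | l | l
    · have e : d x y = d z y := by grind
      rw [e]; linarith
    · have e : d x y ≤ d z y := by grind
      have := h _ _ (h0 x y) e
      rw [l]; linarith
    · have e : d x y = d x z := by grind
      rw [e]; linarith
end

section
/- The function f : [0,∞) → [0,∞) defined by f(x) = x for x ≤ 1 and f(x) = 1/2 for x > 1 is ultrametric-metric-preserving, but it is neither metric-preserving nor ultrametric-preserving. -/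
noncomputable def f17 : ℝ → ℝ := fun x => if x ≤ 1 then x else 1 / 2

theorem stmt17 :
    UltrametricMetricPreserving f17 ∧
      ¬ MetricPreserving f17 ∧ ¬ UltrametricPreserving f17 := by
  refine ⟨?_, ?_, ?_⟩
  · rintro X d ⟨h0, h1, h2, h3⟩
    refine ⟨?_, ?_, ?_, ?_⟩
    · intro x y
      have := h0 x y
      simp only [f17]
      split_ifs <;> linarith
    · intro x y
      rw [← h1 x y]
      simp only [f17]
      split_ifs
      · rfl
      · constructor <;> intro h <;> linarith
    · intro x y
      simp only [h2 x y]
    · intro x y z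
      have a := h0 x y
      have b := h0 x z
      have c := h0 z y
      have e := h3 x y z
      have g := h3 x z y
      have k := h3 z y x
      rw [h2 y z] at g
      rw [h2 z x] at k
      simp only [f17]
      rw [le_max_iff] at e g k
      split_ifs <;> rcases e with e | e <;> rcases g with g | g <;>
        rcases k with k | k <;> linarith
  · intro h
    have := (h ℝ (fun x y => |x - y|) ⟨fun x y => abs_nonneg _,
      fun x y => by rw [abs_eq_zero, sub_eq_zero], fun x y => abs_sub_comm x y,
      fun x y z => abs_sub_le x z y⟩).2.2.2 0 1 (11 / 10)
    norm_num [f17, abs_of_pos, abs_of_neg] at this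
  · intro h
    have := (h (Fin 3) (fun i j => if i = j then 0 else if i = 2 ∨ j = 2 then 2 else 1) (by
      refine ⟨?_, ?_, ?_, ?_⟩
      · intro i j
        fin_cases i <;> fin_cases j <;> simp
      · intro i j
        fin_cases i <;> fin_cases j <;> simp
      · intro i j
        fin_cases i <;> fin_cases j <;> simp
      · intro i j k
        fin_cases i <;> fin_cases j <;> fin_cases k <;> simp)).2.2.2 0 1 2
    have e1 : (0 : Fin 3) ≠ 2 := by decide
    have e2 : (1 : Fin 3) ≠ 2 := by decide
    norm_num [f17, e1, e2, e2.symm] at this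
end

section
/- Let f : [0,∞) → [0,∞) be metric-preserving. Then the following are equivalent: (1) f is continuous on [0,∞); (2) f is continuous at 0; (3) for every ε > 0 there exists x > 0 such that f(x) < ε; (4) f is uniformly continuous on [0,∞). -/
theorem isMetric_dist_aux (X : Type) [MetricSpace X] : IsMetric (fun x y : X => dist x y) :=
  ⟨fun _ _ => dist_nonneg, fun _ _ => dist_eq_zero, fun x y => dist_comm x y,
    fun x y z => dist_triangle x z y⟩

theorem stmt19 (f : ℝ → ℝ) (hf : ∀ x, 0 ≤ x → 0 ≤ f x)
    (h : MetricPreserving f) :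
    List.TFAE [ContinuousOn f (Set.Ici 0),
      ContinuousWithinAt f (Set.Ici 0) 0,
      ∀ ε : ℝ, 0 < ε → ∃ x : ℝ, 0 < x ∧ f x < ε,
      UniformContinuousOn f (Set.Ici 0)] := by
  have hR := h ℝ _ (isMetric_dist_aux ℝ)
  have hP := h (ℝ × ℝ) _ (isMetric_dist_aux (ℝ × ℝ))
  have f0 : f 0 = 0 := by
    have := (hR.2.1 0 0).2 rfl
    simpa using this
  have key1 : ∀ x y : ℝ, 0 ≤ x → 0 ≤ y → f x ≤ f y + f (dist x y) := by
    intro x y hx hy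
    have := hR.2.2.2 0 x y
    simp only [Real.dist_eq, zero_sub, abs_neg, abs_of_nonneg hx, abs_of_nonneg hy] at this
    rw [dist_comm, Real.dist_eq]
    exact this
  have key2 : ∀ a b : ℝ, 0 ≤ a → a ≤ 2 * b → f a ≤ 2 * f b := by
    intro a b ha hab
    have := hP.2.2.2 (0, 0) (a, 0) (a / 2, b)
    have hb : 0 ≤ b := by linarith
    have e1 : dist ((0 : ℝ), (0 : ℝ)) (a, 0) = a := by
      simp [Prod.dist_eq, Real.dist_eq, abs_of_nonneg ha, ha]
    have e2 : dist ((0 : ℝ), (0 : ℝ)) (a / 2, b) = b := by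
      rw [Prod.dist_eq, Real.dist_eq, Real.dist_eq, zero_sub, zero_sub, abs_neg, abs_neg,
        abs_of_nonneg hb, abs_of_nonneg (by linarith : 0 ≤ a / 2)]
      exact max_eq_right (by linarith)
    have e3 : dist (a / 2, b) (a, (0 : ℝ)) = b := by
      rw [Prod.dist_eq, Real.dist_eq, Real.dist_eq, sub_zero, abs_sub_comm,
        abs_of_nonneg hb, abs_of_nonneg (by linarith : 0 ≤ a - a / 2)]
      exact max_eq_right (by linarith)
    simp only [e1, e2, e3] at this
    linarith
  tfae_have 1 → 2 := fun h1 => h1 0 Set.self_mem_Ici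
  tfae_have 2 → 3 := by
    intro h2 ε hε
    obtain ⟨δ, hδ, H⟩ := Metric.continuousWithinAt_iff.1 h2 ε hε
    refine ⟨δ / 2, by linarith, ?_⟩
    have hd : (0 : ℝ) ≤ δ / 2 := by linarith
    have := H (Set.mem_Ici.2 hd) (by rw [Real.dist_eq, sub_zero, abs_of_nonneg hd]; linarith)
    rw [f0, Real.dist_eq, sub_zero] at this
    exact lt_of_abs_lt this
  tfae_have 3 → 4 := by
    intro h3
    rw [Metric.uniformContinuousOn_iff]
    intro ε hε
    obtain ⟨x, hx, hfx⟩ := h3 (ε / 2) (by linarith)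
    refine ⟨2 * x, by linarith, ?_⟩
    intro u hu v hv huv
    have k := key2 _ x (dist_nonneg (x := u) (y := v)) huv.le
    have k1 := key1 u v hu hv
    have k2 := key1 v u hv hu
    rw [dist_comm v u] at k2
    rw [Real.dist_eq (f u), abs_lt]
    constructor <;> linarith
  tfae_have 4 → 1 := fun h4 => h4.continuousOn
  tfae_finish
end
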